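/- Let κ ∈ ℂ, and define ρ = (λ − μ + ν + 1)/2 and a = (a₁,a₂,a₃) = ((λ−μ+ν+1)/(2κ), (λ+μ+ν+3)/(2κ), (1+λ)/κ). Then the pair of functions f₀(z) = z^{λ/(2κ)}(1−z)^{ν/(2κ)} ₂F₁(a₁,a₂;a₃|z) and f₁(z) = −(a₁/a₃)·z^{λ/(2κ)}(1−z)^{ν/(2κ)} ₂F₁(a₁+1,a₂;a₃+1|z) satisfies the Knizhnik–Zamolodchikov system κ f₀' = f₀·(λ/(2z) + (ν−2ρ)/(2(z−1))) + f₁·(ν−ρ+1)/(z−1) and κ f₁' = f₀·(ρ/(z−1) − ρ/z) + f₁·((−λ−2)/(2z) − (ν−2(ρ−1))/(2(z−1))) on 0 < |z| < 1. -/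

import Mathlib

/-- The Gauss hypergeometric series `₂F₁(a,b;c|z) = Σ_{n≥0} (a)ₙ(b)ₙ/((c)ₙ n!) zⁿ`. -/
noncomputable def hyp2F1 (a b c z : ℂ) : ℂ :=
  ∑' n : ℕ,
    ((ascPochhammer ℂ n).eval a * (ascPochhammer ℂ n).eval b /
      ((ascPochhammer ℂ n).eval c * (n.factorial : ℂ))) * z ^ n

/-- Coefficient of the Gauss series. -/
noncomputable def kzCoef (a b c : ℂ) (n : ℕ) : ℂ :=
  (ascPochhammer ℂ n).eval a * (ascPochhammer ℂ n).eval b /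
      ((ascPochhammer ℂ n).eval c * (n.factorial : ℂ))

lemma kz_poch_ne {c : ℂ} (hc : ∀ m : ℕ, c ≠ -(m : ℂ)) (n : ℕ) :
    (ascPochhammer ℂ n).eval c ≠ 0 := by
  induction n with
  | zero => simp
  | succ n ih =>
    rw [ascPochhammer_succ_eval]
    refine mul_ne_zero ih ?_
    intro h
    exact hc n (by linear_combination h)

lemma kz_poch_left (a : ℂ) (n : ℕ) :
    (ascPochhammer ℂ n).eval a * (a + n) = a * (ascPochhammer ℂ n).eval (a + 1) := by
  rw [← ascPochhammer_succ_eval, ascPochhammer_succ_left]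
  simp [Polynomial.eval_comp]

lemma kzCoef_zero (a b c : ℂ) : kzCoef a b c 0 = 1 := by simp [kzCoef]

lemma kz_add_ne {c : ℂ} (hc : ∀ m : ℕ, c ≠ -(m : ℂ)) (n : ℕ) : c + n ≠ 0 := by
  intro h
  exact hc n (by linear_combination h)

lemma kz_shift {c : ℂ} (hc : ∀ m : ℕ, c ≠ -(m : ℂ)) : ∀ m : ℕ, c + 1 ≠ -(m : ℂ) := by
  intro m h
  exact hc (m + 1) (by push_cast; linear_combination h)

lemma kzCoef_succ (a b : ℂ) {c : ℂ} (hc : ∀ m : ℕ, c ≠ -(m : ℂ)) (n : ℕ) :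
    kzCoef a b c (n + 1) * ((c + n) * (n + 1)) = kzCoef a b c n * ((a + n) * (b + n)) := by
  have h1 := kz_poch_ne hc n
  have h2 := kz_add_ne hc n
  have h3 : (n : ℂ) + 1 ≠ 0 := Nat.cast_add_one_ne_zero n
  have h4 : (n.factorial : ℂ) ≠ 0 := by exact_mod_cast n.factorial_ne_zero
  simp only [kzCoef, ascPochhammer_succ_eval, Nat.factorial_succ]
  push_cast
  field_simp

lemma kzCoef_shift (a b : ℂ) {c : ℂ} (hc : ∀ m : ℕ, c ≠ -(m : ℂ)) (n : ℕ) :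
    kzCoef a b c n * (c * (a + n)) = kzCoef (a + 1) b (c + 1) n * (a * (c + n)) := by
  have h1 := kz_poch_ne hc n
  have h1' := kz_poch_ne (kz_shift hc) n
  have h4 : (n.factorial : ℂ) ≠ 0 := by exact_mod_cast n.factorial_ne_zero
  have ha := kz_poch_left a n
  have hcc := kz_poch_left c n
  simp only [kzCoef]
  field_simp
  linear_combination (ascPochhammer ℂ n).eval b *
    (c * (ascPochhammer ℂ n).eval (c + 1) * ha -
      a * (ascPochhammer ℂ n).eval (a + 1) * hcc)

lemma kz_tendsto (a b : ℂ) :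
    Filter.Tendsto (fun n : ℕ => (a + n) / (b + n)) Filter.atTop (nhds 1) := by
  have h := tendsto_add_mul_div_add_mul_atTop_nhds (𝕜 := ℂ) a b 1 (one_ne_zero : (1:ℂ) ≠ 0)
  simpa using h

lemma kz_summable_d (a b : ℂ) {c : ℂ} (hc : ∀ m : ℕ, c ≠ -(m : ℂ)) {r : ℝ} (hr0 : 0 ≤ r)
    (hr : r < 1) : Summable (fun n : ℕ => ‖(n : ℂ) * kzCoef a b c n‖ * r ^ (n - 1)) := by
  rw [← summable_nat_add_iff 1]
  obtain ⟨s, hs, hs1⟩ := exists_between hr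
  apply summable_of_ratio_norm_eventually_le hs1
  have ht : Filter.Tendsto (fun n : ℕ => ‖((a + 1 + n) / (c + 1 + n)) * ((b + 1 + n) / (1 + n))‖ * r)
      Filter.atTop (nhds r) := by
    have := (((kz_tendsto (a + 1) (c + 1)).mul (kz_tendsto (b + 1) 1)).norm).mul_const r
    simpa using this
  filter_upwards [ht.eventually (ge_mem_nhds hs)] with n hn
  have h2 := kz_add_ne (kz_shift hc) n
  have h3 : (n : ℂ) + 1 ≠ 0 := Nat.cast_add_one_ne_zero n
  have h3' : (1 : ℂ) + n ≠ 0 := by rwa [add_comm]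
  have h5 : (n : ℂ) + 1 + 1 ≠ 0 := by exact_mod_cast Nat.succ_ne_zero (n + 1)
  have key : ((n + 1 + 1 : ℕ) : ℂ) * kzCoef a b c (n + 1 + 1) =
      (((a + 1 + n) / (c + 1 + n)) * ((b + 1 + n) / (1 + n))) *
        (((n + 1 : ℕ) : ℂ) * kzCoef a b c (n + 1)) := by
    have := kzCoef_succ a b hc (n + 1)
    push_cast at this ⊢
    field_simp
    linear_combination (1 + (n : ℂ)) * this
  have hX0 : 0 ≤ ‖((n + 1 : ℕ) : ℂ) * kzCoef a b c (n + 1)‖ * r ^ n := by positivity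
  have hY0 : 0 ≤ ‖((n + 1 + 1 : ℕ) : ℂ) * kzCoef a b c (n + 1 + 1)‖ * r ^ (n + 1) := by positivity
  simp only [Nat.add_sub_cancel]
  rw [Real.norm_of_nonneg hX0, Real.norm_of_nonneg hY0, key, norm_mul, pow_succ]
  calc _ = (‖((a + 1 + n) / (c + 1 + n)) * ((b + 1 + n) / (1 + n))‖ * r) *
        (‖((n + 1 : ℕ) : ℂ) * kzCoef a b c (n + 1)‖ * r ^ n) := by
        generalize ‖((a + 1 + n) / (c + 1 + n)) * ((b + 1 + n) / (1 + n))‖ = A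
        ring
    _ ≤ _ := by gcongr

lemma kz_summable (a b : ℂ) {c : ℂ} (hc : ∀ m : ℕ, c ≠ -(m : ℂ)) {z : ℂ} (hz : ‖z‖ < 1) :
    Summable (fun n : ℕ => kzCoef a b c n * z ^ n) := by
  have h := kz_summable_d a b hc (norm_nonneg z) hz
  rw [← summable_nat_add_iff 1] at h ⊢
  refine Summable.of_norm_bounded h ?_
  intro n
  simp only [Nat.add_sub_cancel, norm_mul, norm_pow, pow_succ, Complex.norm_natCast]
  push_cast
  have hX : 0 ≤ ‖kzCoef a b c (n + 1)‖ * ‖z‖ ^ n := by positivity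
  nlinarith [mul_nonneg hX (sub_nonneg.2 hz.le), mul_nonneg hX (Nat.cast_nonneg (α := ℝ) n)]

lemma kz_hasSum (a b : ℂ) {c : ℂ} (hc : ∀ m : ℕ, c ≠ -(m : ℂ)) {z : ℂ} (hz : ‖z‖ < 1) :
    HasSum (fun n : ℕ => kzCoef a b c n * z ^ n) (hyp2F1 a b c z) :=
  (kz_summable a b hc hz).hasSum

lemma kz_deriv (a b : ℂ) {c : ℂ} (hc : ∀ m : ℕ, c ≠ -(m : ℂ)) {z : ℂ} (hz : ‖z‖ < 1) :
    ∃ D : ℂ, HasDerivAt (hyp2F1 a b c) D z ∧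
      HasSum (fun n : ℕ => ((n : ℂ) + 1) * kzCoef a b c (n + 1) * z ^ n) D ∧
      HasSum (fun n : ℕ => (n : ℂ) * kzCoef a b c n * z ^ n) (z * D) := by
  obtain ⟨r, hr, hr1⟩ := exists_between hz
  have hr0 : 0 < r := (norm_nonneg z).trans_lt hr
  have hS := kz_summable_d a b hc hr0.le hr1
  have hb : ∀ (n : ℕ) (y : ℂ), y ∈ Metric.ball (0 : ℂ) r →
      ‖kzCoef a b c n * ((n : ℂ) * y ^ (n - 1))‖ ≤ ‖(n : ℂ) * kzCoef a b c n‖ * r ^ (n - 1) := by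
    intro n y hy
    rw [mem_ball_zero_iff] at hy
    rw [norm_mul, norm_mul, norm_mul, norm_pow]
    have : ‖y‖ ^ (n - 1) ≤ r ^ (n - 1) := by gcongr
    calc _ = ‖(n : ℂ)‖ * ‖kzCoef a b c n‖ * ‖y‖ ^ (n - 1) := by ring
      _ ≤ _ := by gcongr
  have hzb : z ∈ Metric.ball (0 : ℂ) r := by simpa using hr
  have hd := hasDerivAt_tsum_of_isPreconnected (g := fun (n : ℕ) (y : ℂ) => kzCoef a b c n * y ^ n)
    (g' := fun (n : ℕ) (y : ℂ) => kzCoef a b c n * ((n : ℂ) * y ^ (n - 1))) (y := z) hS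
    Metric.isOpen_ball (convex_ball (0 : ℂ) r).isPreconnected
    (fun n y _ => (hasDerivAt_pow n y).const_mul _) hb hzb (kz_summable a b hc hz) hzb
  have hs : Summable (fun n : ℕ => kzCoef a b c n * ((n : ℂ) * z ^ (n - 1))) :=
    Summable.of_norm_bounded hS (fun n => hb n z hzb)
  have h1 := hs.hasSum
  refine ⟨_, hd, ?_, ?_⟩
  · rw [← hasSum_nat_add_iff' 1] at h1
    simp only [Finset.range_one, Finset.sum_singleton, Nat.cast_zero, zero_mul, mul_zero,
      sub_zero, Nat.add_sub_cancel] at h1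
    have e : (fun n : ℕ => ((n : ℂ) + 1) * kzCoef a b c (n + 1) * z ^ n) =
        fun n : ℕ => kzCoef a b c (n + 1) * (((n + 1 : ℕ) : ℂ) * z ^ n) := by
      funext n
      push_cast
      ring
    rw [e]
    exact h1
  · have e : (fun n : ℕ => (n : ℂ) * kzCoef a b c n * z ^ n) =
        fun n : ℕ => z * (kzCoef a b c n * ((n : ℂ) * z ^ (n - 1))) := by
      funext n
      rcases n with _ | n
      · simp
      · rw [Nat.add_sub_cancel, pow_succ]
        ring
    rw [e]
    exact h1.mul_left z

lemma kz_id1 (a b : ℂ) {c : ℂ} (hc : ∀ m : ℕ, c ≠ -(m : ℂ)) {z : ℂ} (hz : ‖z‖ < 1) :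
    ∃ D : ℂ, HasDerivAt (hyp2F1 a b c) D z ∧
      (1 - z) * D = a * hyp2F1 a b c z + a / c * (b - c) * hyp2F1 (a + 1) b (c + 1) z := by
  obtain ⟨D, hD, h1, h2⟩ := kz_deriv a b hc hz
  refine ⟨D, hD, ?_⟩
  have hF := kz_hasSum a b hc hz
  have hG := kz_hasSum (a + 1) b (kz_shift hc) hz
  have hc0 : c ≠ 0 := by simpa using hc 0
  have e : (fun n : ℕ => ((n : ℂ) + 1) * kzCoef a b c (n + 1) * z ^ n
        - (n : ℂ) * kzCoef a b c n * z ^ n) =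
      fun n : ℕ => a * (kzCoef a b c n * z ^ n) +
        a / c * (b - c) * (kzCoef (a + 1) b (c + 1) n * z ^ n) := by
    funext n
    have h3 := kz_add_ne hc n
    have s1 := kzCoef_succ a b hc n
    have s2 := kzCoef_shift a b hc n
    have : ((n : ℂ) + 1) * kzCoef a b c (n + 1) = (n : ℂ) * kzCoef a b c n +
        (a * kzCoef a b c n + a / c * (b - c) * kzCoef (a + 1) b (c + 1) n) := by
      apply mul_left_cancel₀ (mul_ne_zero hc0 h3)
      have ht : a / c * c = a := div_mul_cancel₀ a hc0
      linear_combination c * s1 + (b - c) * s2 -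
        (c + n) * (b - c) * kzCoef (a + 1) b (c + 1) n * ht
    linear_combination z ^ n * this
  have h := h1.sub h2
  rw [e] at h
  have := h.unique ((hF.mul_left a).add (hG.mul_left (a / c * (b - c))))
  linear_combination this

lemma kz_id2 (a b : ℂ) {c : ℂ} (hc : ∀ m : ℕ, c ≠ -(m : ℂ)) {z : ℂ} (hz : ‖z‖ < 1) :
    ∃ D : ℂ, HasDerivAt (hyp2F1 (a + 1) b (c + 1)) D z ∧
      z * (1 - z) * D = c * hyp2F1 a b c z + (b * z - c) * hyp2F1 (a + 1) b (c + 1) z := by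
  obtain ⟨D, hD, -, h2⟩ := kz_deriv (a + 1) b (kz_shift hc) hz
  refine ⟨D, hD, ?_⟩
  have hF := kz_hasSum a b hc hz
  have hG := kz_hasSum (a + 1) b (kz_shift hc) hz
  have hc0 : c ≠ 0 := by simpa using hc 0
  have hA := (h2.add (hG.mul_left c)).sub (hF.mul_left c)
  rw [← hasSum_nat_add_iff' 1] at hA
  simp only [Finset.range_one, Finset.sum_singleton, kzCoef_zero] at hA
  have hB := ((hG.mul_left b).add h2).mul_left z
  have e : (fun n : ℕ => ((n + 1 : ℕ) : ℂ) * kzCoef (a + 1) b (c + 1) (n + 1) * z ^ (n + 1) +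
        c * (kzCoef (a + 1) b (c + 1) (n + 1) * z ^ (n + 1)) -
        c * (kzCoef a b c (n + 1) * z ^ (n + 1))) =
      fun n : ℕ => z * (b * (kzCoef (a + 1) b (c + 1) n * z ^ n) +
        (n : ℂ) * kzCoef (a + 1) b (c + 1) n * z ^ n) := by
    funext n
    have h3 := kz_add_ne hc n
    have h4 : (n : ℂ) + 1 ≠ 0 := Nat.cast_add_one_ne_zero n
    have s1 := kzCoef_succ a b hc n
    have s2 := kzCoef_shift a b hc n
    have s3 := kzCoef_succ (a + 1) b (kz_shift hc) n
    have : ((n : ℂ) + 1 + c) * kzCoef (a + 1) b (c + 1) (n + 1) - c * kzCoef a b c (n + 1) =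
        (b + n) * kzCoef (a + 1) b (c + 1) n := by
      apply mul_left_cancel₀ (mul_ne_zero h3 h4)
      linear_combination (c + n) * s3 - c * s1 - (b + n) * s2
    push_cast
    rw [pow_succ]
    linear_combination z ^ n * z * this
  rw [e] at hA
  have := hA.unique hB
  simp at this
  linear_combination this

/-- The explicit hypergeometric solution of the Knizhnik–Zamolodchikov system for the
four-point `sl(2)-hat` conformal block with one spin-1/2 degenerate insertion (channel
`λ' = λ + 1`):  with `ρ = (λ-μ+ν+1)/2`,
`a = ((λ-μ+ν+1)/(2κ), (λ+μ+ν+3)/(2κ), (1+λ)/κ)`, the pair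
`f₀(z) = z^{λ/(2κ)}(1-z)^{ν/(2κ)} ₂F₁(a₁,a₂;a₃|z)` and
`f₁(z) = -(a₁/a₃) z^{λ/(2κ)}(1-z)^{ν/(2κ)} ₂F₁(a₁+1,a₂;a₃+1|z)` satisfies
`κ f₀' = f₀(λ/(2z) + (ν-2ρ)/(2(z-1))) + f₁(ν-ρ+1)/(z-1)` and
`κ f₁' = f₀(ρ/(z-1) - ρ/z) + f₁((-λ-2)/(2z) - (ν-2(ρ-1))/(2(z-1)))` on `0 < |z| < 1`. -/
theorem kz_hypergeometric_solution (lam mu nu κ : ℂ) (hκ : κ ≠ 0)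
    (hpole : ∀ m : ℕ, (1 + lam) / κ ≠ -(m : ℂ))
    (ρ a₁ a₂ a₃ : ℂ)
    (hρ : ρ = (lam - mu + nu + 1) / 2)
    (ha₁ : a₁ = (lam - mu + nu + 1) / (2 * κ))
    (ha₂ : a₂ = (lam + mu + nu + 3) / (2 * κ))
    (ha₃ : a₃ = (1 + lam) / κ)
    (f₀ f₁ : ℂ → ℂ)
    (hf₀ : f₀ = fun w => w ^ (lam / (2 * κ)) * (1 - w) ^ (nu / (2 * κ)) *
      hyp2F1 a₁ a₂ a₃ w)
    (hf₁ : f₁ = fun w => -(a₁ / a₃) * (w ^ (lam / (2 * κ)) * (1 - w) ^ (nu / (2 * κ)) *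
      hyp2F1 (a₁ + 1) a₂ (a₃ + 1) w))
    (z : ℂ) (hz0 : z ≠ 0) (hz1 : ‖z‖ < 1) (hcut : ¬(z.im = 0 ∧ z.re ≤ 0)) :
    κ * deriv f₀ z =
        f₀ z * (lam / (2 * z) + (nu - 2 * ρ) / (2 * (z - 1))) +
          f₁ z * ((nu - ρ + 1) / (z - 1)) ∧
    κ * deriv f₁ z =
        f₀ z * (ρ / (z - 1) - ρ / z) +
          f₁ z * ((-lam - 2) / (2 * z) - (nu - 2 * (ρ - 1)) / (2 * (z - 1))) := by
  have hc : ∀ m : ℕ, a₃ ≠ -(m : ℂ) := by rw [ha₃]; exact hpole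
  have hc0 : a₃ ≠ 0 := by simpa using hc 0
  obtain ⟨D, hD, e1⟩ := kz_id1 a₁ a₂ hc hz1
  obtain ⟨E, hE, e2⟩ := kz_id2 a₁ a₂ hc hz1
  have hzs : z ∈ Complex.slitPlane := by
    rw [Complex.mem_slitPlane_iff]
    by_contra! h
    exact hcut ⟨h.2, h.1⟩
  have h1s : 1 - z ∈ Complex.slitPlane := by
    rw [Complex.mem_slitPlane_iff]
    left
    have := (Complex.re_le_norm z).trans_lt hz1
    simp only [Complex.sub_re, Complex.one_re]
    linarith
  have h1z : 1 - z ≠ 0 := Complex.slitPlane_ne_zero h1s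
  have hz1' : z - 1 ≠ 0 := by
    intro h
    exact h1z (by linear_combination -h)
  have hp1 : HasDerivAt (fun w : ℂ => w ^ (lam / (2 * κ)))
      (z ^ (lam / (2 * κ)) * (lam / (2 * κ) / z)) z := by
    have h := (hasDerivAt_id' z).cpow_const (c := lam / (2 * κ)) hzs
    convert h using 1
    rw [Complex.cpow_sub _ _ hz0, Complex.cpow_one]
    ring
  have hp2 : HasDerivAt (fun w : ℂ => (1 - w) ^ (nu / (2 * κ)))
      ((1 - z) ^ (nu / (2 * κ)) * (nu / (2 * κ) / (z - 1))) z := by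
    have h := ((hasDerivAt_id' z).const_sub 1).cpow_const (c := nu / (2 * κ)) h1s
    convert h using 1
    rw [Complex.cpow_sub _ _ h1z, Complex.cpow_one]
    field_simp
    ring
  have hd0 := (hp1.mul hp2).mul hD
  have hd1 := ((hp1.mul hp2).mul hE).const_mul (-(a₁ / a₃))
  have eD : D = -(a₁ * hyp2F1 a₁ a₂ a₃ z +
      a₁ / a₃ * (a₂ - a₃) * hyp2F1 (a₁ + 1) a₂ (a₃ + 1) z) / (z - 1) := by
    rw [← e1]; field_simp; ring
  have eE : E = -(a₃ * hyp2F1 a₁ a₂ a₃ z +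
      (a₂ * z - a₃) * hyp2F1 (a₁ + 1) a₂ (a₃ + 1) z) / (z * (z - 1)) := by
    rw [← e2]; field_simp; ring
  have hd0' := (hd0.congr_of_eventuallyEq (f₁ := f₀)
    (Filter.Eventually.of_forall fun _ => by rw [hf₀]; rfl)).deriv
  have hd1' := (hd1.congr_of_eventuallyEq (f₁ := f₁)
    (Filter.Eventually.of_forall fun _ => by rw [hf₁]; rfl)).deriv
  have k1 : ρ = κ * a₁ := by rw [hρ, ha₁]; field_simp
  have k3 : lam = κ * a₃ - 1 := by rw [ha₃]; field_simp; ring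
  have k2 : nu = κ * (a₁ + a₂ - a₃) - 1 := by rw [ha₁, ha₂, ha₃]; field_simp; ring
  rw [hd0', hd1', hf₀, hf₁]
  simp only [Pi.mul_apply]
  generalize z ^ (lam / (2 * κ)) = P
  generalize (1 - z) ^ (nu / (2 * κ)) = Q
  rw [eD, eE]
  generalize hyp2F1 a₁ a₂ a₃ z = F
  generalize hyp2F1 (a₁ + 1) a₂ (a₃ + 1) z = G
  rw [k1, k2, k3]
  clear * - hκ hc0 hz0 hz1'
  constructor
  · field_simp
    ring
  · field_simp
    ring
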